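/- arXiv:2005.08166 — 2 statements merged into one kernel-verified Lean document; each statement's English description precedes it below -/
import Mathlib

section
/- Let k ≥ 1, n = k + 2, and consider the orthogonal decomposition ℝ^{1,n+1} = ℝ^{1,k+1} ⊕ ℝ², with e_{n−1}, e_n an orthonormal basis of the Euclidean factor ℝ². Let a ∈ ℝ be nonzero and set 𝔤 := so(1,k+1) ⊕ ℝ·(e_{n−1}∧e_n + a·id_{ℝ^{1,n+1}}) ⊆ co(1,n+1), where so(1,k+1) acts by zero on ℝ². Then every algebraic curvature tensor R ∈ ℛ(𝔤) takes values in so(1,k+1); in particular L(ℛ(𝔤)) ⊆ so(1,k+1) ⊊ 𝔤 and 𝔤 is not a Berger algebra. -/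
open Module

noncomputable section

namespace Weyl

variable {V : Type*} [AddCommGroup V] [Module ℝ V]

/-- The endomorphism `X ∧ Y : Z ↦ B(X,Z)•Y − B(Y,Z)•X`. -/
def wedge (B : LinearMap.BilinForm ℝ V) (X Y : V) : Module.End ℝ V where
  toFun Z := B X Z • Y - B Y Z • X
  map_add' z z' := by simp only [map_add, add_smul]; abel
  map_smul' c z := by simp only [map_smul, smul_eq_mul, RingHom.id_apply, mul_smul, smul_sub]

/-- The Lie algebra `so(B)` of endomorphisms skew-symmetric with respect to `B`. -/
def soSet (B : LinearMap.BilinForm ℝ V) : Set (Module.End ℝ V) :=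
  {A | ∀ x y, B (A x) y + B x (A y) = 0}

/-- The conformal Lie algebra `co(B) = ℝ·id ⊕ so(B)`. -/
def coSet (B : LinearMap.BilinForm ℝ V) : Set (Module.End ℝ V) :=
  {F | ∃ c : ℝ, ∃ S ∈ soSet B, F = c • (1 : Module.End ℝ V) + S}

/-- The first prolongation `g^{(1)}` of a set of endomorphisms:
linear maps `φ : V → g` with `φ(X)Y = φ(Y)X`. -/
def firstProlong (g : Set (Module.End ℝ V)) : Set (V →ₗ[ℝ] Module.End ℝ V) :=
  {φ | (∀ x, φ x ∈ g) ∧ ∀ x y, φ x y = φ y x}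

/-- `R` is an algebraic curvature tensor of type `g` (a linear map on `Λ²V`,
encoded as an antisymmetric bilinear map, with values in `g`, satisfying the
Bianchi identity). -/
def IsCurv (g : Set (Module.End ℝ V)) (R : V →ₗ[ℝ] V →ₗ[ℝ] Module.End ℝ V) : Prop :=
  (∀ x y, R x y = - R y x) ∧ (∀ x y, R x y ∈ g) ∧
    ∀ x y z, R x y z + R y z x + R z x y = 0

/-- `L(ℛ(g))`: the span of all values of algebraic curvature tensors of type `g`. -/
def curvSpan (g : Set (Module.End ℝ V)) : Submodule ℝ (Module.End ℝ V) :=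
  Submodule.span ℝ {F | ∃ R, IsCurv g R ∧ ∃ x y, F = R x y}

/-- `g` is a Berger algebra: `L(ℛ(g)) = g`. -/
def IsBerger (g : Set (Module.End ℝ V)) : Prop :=
  (curvSpan g : Set (Module.End ℝ V)) = g

/-- `g` is (the underlying set of) a Lie subalgebra of `gl(V)`. -/
def IsLieSub (g : Set (Module.End ℝ V)) : Prop :=
  (0 : Module.End ℝ V) ∈ g ∧ (∀ F ∈ g, ∀ F' ∈ g, F + F' ∈ g) ∧
    (∀ (c : ℝ), ∀ F ∈ g, c • F ∈ g) ∧ ∀ F ∈ g, ∀ F' ∈ g, F * F' - F' * F ∈ g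

/-- The subspace `W` is invariant under every element of `g`. -/
def Invariant (g : Set (Module.End ℝ V)) (W : Submodule ℝ V) : Prop :=
  ∀ F ∈ g, ∀ x ∈ W, F x ∈ W

/-- The restriction of `B` to `W` is nondegenerate. -/
def IsNondegOn (B : LinearMap.BilinForm ℝ V) (W : Submodule ℝ V) : Prop :=
  ∀ x ∈ W, (∀ y ∈ W, B x y = 0) → x = 0

/-- Weak irreducibility: no proper nonzero invariant nondegenerate subspace. -/
def WeaklyIrred (B : LinearMap.BilinForm ℝ V) (g : Set (Module.End ℝ V)) : Prop :=
  ∀ W : Submodule ℝ V, Invariant g W → IsNondegOn B W → W = ⊥ ∨ W = ⊤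

/-- Irreducibility: no proper nonzero invariant subspace. -/
def Irred (g : Set (Module.End ℝ V)) : Prop :=
  ∀ W : Submodule ℝ V, Invariant g W → W = ⊥ ∨ W = ⊤

/-- The Euclidean dot product on `Fin n → ℝ`. -/
def dotE (n : ℕ) : LinearMap.BilinForm ℝ (Fin n → ℝ) :=
  LinearMap.mk₂ ℝ (fun x y => ∑ i, x i * y i)
    (fun x x' y => by simp [add_mul, Finset.sum_add_distrib])
    (fun c x y => by simp [Finset.mul_sum, mul_assoc])
    (fun x y y' => by simp [mul_add, Finset.sum_add_distrib])
    (fun c x y => by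
      simp only [Pi.smul_apply, smul_eq_mul, Finset.mul_sum]
      exact Finset.sum_congr rfl fun i _ => by ring)

/-- Minkowski space `ℝ^{1,n+1}` in Witt coordinates: the vector `(v, x, u)`
represents `v·p + x + u·q` with respect to a Witt basis `p, e₁, …, eₙ, q`. -/
abbrev Mink (n : ℕ) := ℝ × (Fin n → ℝ) × ℝ

/-- The Minkowski metric in Witt coordinates: `p, q` are isotropic, `(p,q) = 1`,
and the form is the Euclidean one on the `ℝⁿ`-part orthogonal to `p` and `q`. -/
def minkB (n : ℕ) : LinearMap.BilinForm ℝ (Mink n) :=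
  LinearMap.mk₂ ℝ (fun X Y => X.1 * Y.2.2 + X.2.2 * Y.1 + dotE n X.2.1 Y.2.1)
    (fun X X' Y => by
      simp only [Prod.fst_add, Prod.snd_add, Pi.add_apply, map_add,
        LinearMap.add_apply]
      ring)
    (fun c X Y => by
      simp only [Prod.smul_fst, Prod.smul_snd, smul_eq_mul, map_smul,
        LinearMap.smul_apply]
      ring)
    (fun X Y Y' => by
      simp only [Prod.fst_add, Prod.snd_add, Pi.add_apply, map_add,
        LinearMap.add_apply]
      ring)
    (fun c X Y => by
      simp only [Prod.smul_fst, Prod.smul_snd, smul_eq_mul, map_smul,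
        LinearMap.smul_apply]
      ring)

/-- The Witt basis vector `p`. -/
def pvec (n : ℕ) : Mink n := (1, 0, 0)

/-- The Witt basis vector `q`. -/
def qvec (n : ℕ) : Mink n := (0, 0, 1)

/-- The embedding of `ℝⁿ` into Minkowski space. -/
def emb {n : ℕ} (x : Fin n → ℝ) : Mink n := (0, x, 0)

/-- The subspace `ℝ^{1,k+1} = span(p, e₁, …, e_k, q)` of `ℝ^{1,n+1}`, `n = k+2`. -/
def MW1 (k : ℕ) : Submodule ℝ (Mink (k + 2)) where
  carrier := {w | ∀ i : Fin (k + 2), k ≤ (i : ℕ) → w.2.1 i = 0}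
  zero_mem' := fun i _ => rfl
  add_mem' := by
    intro a b ha hb i hi
    show a.2.1 i + b.2.1 i = 0
    rw [ha i hi, hb i hi]; ring
  smul_mem' := by
    intro c a ha i hi
    show c * a.2.1 i = 0
    rw [ha i hi]; ring

/-- The Euclidean plane `ℝ² = span(e_{n−1}, e_n)`, `n = k+2`. -/
def MW2 (k : ℕ) : Submodule ℝ (Mink (k + 2)) where
  carrier := {w | w.1 = 0 ∧ w.2.2 = 0 ∧ ∀ i : Fin (k + 2), (i : ℕ) < k → w.2.1 i = 0}
  zero_mem' := ⟨rfl, rfl, fun i _ => rfl⟩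
  add_mem' := by
    rintro a b ⟨ha1, ha2, ha3⟩ ⟨hb1, hb2, hb3⟩
    refine ⟨?_, ?_, fun i hi => ?_⟩
    · show a.1 + b.1 = 0
      rw [ha1, hb1]; ring
    · show a.2.2 + b.2.2 = 0
      rw [ha2, hb2]; ring
    · show a.2.1 i + b.2.1 i = 0
      rw [ha3 i hi, hb3 i hi]; ring
  smul_mem' := by
    rintro c a ⟨ha1, ha2, ha3⟩
    refine ⟨?_, ?_, fun i hi => ?_⟩
    · show c * a.1 = 0
      rw [ha1]; ring
    · show c * a.2.2 = 0
      rw [ha2]; ring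
    · show c * a.2.1 i = 0
      rw [ha3 i hi]; ring

/-- `so(1,k+1)`: skew endomorphisms of `ℝ^{1,n+1}` preserving `ℝ^{1,k+1}` and
acting by zero on the Euclidean plane `ℝ²`. -/
def so1 (k : ℕ) : Set (Module.End ℝ (Mink (k + 2))) :=
  {S | S ∈ soSet (minkB (k + 2)) ∧ (∀ x ∈ MW1 k, S x ∈ MW1 k) ∧
    ∀ x ∈ MW2 k, S x = 0}

/-- The rotation `e_{n−1} ∧ e_n`. -/
def Jrot (k : ℕ) : Module.End ℝ (Mink (k + 2)) :=
  wedge (minkB (k + 2)) (emb (Pi.single (⟨k, by omega⟩ : Fin (k + 2)) 1))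
    (emb (Pi.single (⟨k + 1, by omega⟩ : Fin (k + 2)) 1))

/-- The algebra `𝔤 = so(1,k+1) ⊕ ℝ·(e_{n−1}∧e_n + a·id)`. -/
def g16 (k : ℕ) (a : ℝ) : Set (Module.End ℝ (Mink (k + 2))) :=
  {F | ∃ S ∈ so1 k, ∃ c : ℝ,
    F = S + c • (Jrot k + a • (1 : Module.End ℝ (Mink (k + 2))))}

/-- basis vector `e_{n-1}` -/
def eV (k : ℕ) : Mink (k + 2) := emb (Pi.single (⟨k, by omega⟩ : Fin (k + 2)) 1)

/-- basis vector `e_n` -/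
def fV (k : ℕ) : Mink (k + 2) := emb (Pi.single (⟨k + 1, by omega⟩ : Fin (k + 2)) 1)

lemma minkB_apply' (n : ℕ) (X Y : Mink n) :
    minkB n X Y = X.1 * Y.2.2 + X.2.2 * Y.1 + ∑ i, X.2.1 i * Y.2.1 i := rfl

lemma minkB_eV (k : ℕ) (Y : Mink (k + 2)) :
    minkB (k + 2) (eV k) Y = Y.2.1 ⟨k, by omega⟩ := by
  simp [minkB_apply', eV, emb, Pi.single_apply]

lemma minkB_fV (k : ℕ) (Y : Mink (k + 2)) :
    minkB (k + 2) (fV k) Y = Y.2.1 ⟨k + 1, by omega⟩ := by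
  simp [minkB_apply', fV, emb, Pi.single_apply]

lemma Jrot_apply (k : ℕ) (Y : Mink (k + 2)) :
    Jrot k Y = Y.2.1 ⟨k, by omega⟩ • fV k - Y.2.1 ⟨k + 1, by omega⟩ • eV k := by
  rw [← minkB_eV, ← minkB_fV]; rfl

lemma eV_mem (k : ℕ) : eV k ∈ MW2 k := by
  refine ⟨rfl, rfl, fun i hi => ?_⟩
  have : i ≠ ⟨k, by omega⟩ := fun h => by rw [h] at hi; simp at hi
  simp [eV, emb, Pi.single_apply, this]

lemma fV_mem (k : ℕ) : fV k ∈ MW2 k := by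
  refine ⟨rfl, rfl, fun i hi => ?_⟩
  have : i ≠ ⟨k + 1, by omega⟩ := fun h => by rw [h] at hi; simp at hi
  simp [fV, emb, Pi.single_apply, this]

lemma pvec_mem (k : ℕ) : pvec (k + 2) ∈ MW1 k := fun _ _ => rfl

lemma qvec_mem (k : ℕ) : qvec (k + 2) ∈ MW1 k := fun _ _ => rfl

/-- Structure of elements of `g16`. -/
lemma g16_struct (k : ℕ) (a : ℝ) (F : Module.End ℝ (Mink (k + 2))) (hF : F ∈ g16 k a) :
    ∃ c : ℝ, (c = 0 → F ∈ so1 k) ∧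
      (F (eV k)).2.1 ⟨k, by omega⟩ = a * c ∧ (F (eV k)).2.1 ⟨k + 1, by omega⟩ = c ∧
      (F (fV k)).2.1 ⟨k, by omega⟩ = - c ∧ (F (fV k)).2.1 ⟨k + 1, by omega⟩ = a * c ∧
      (F (eV k)).1 = 0 ∧ (F (eV k)).2.2 = 0 ∧ (F (fV k)).1 = 0 ∧ (F (fV k)).2.2 = 0 ∧
      (∀ w ∈ MW1 k, F w ∈ MW1 k) ∧
      (F (pvec (k + 2))).1 + (F (qvec (k + 2))).2.2 = 2 * (a * c) := by
  obtain ⟨S, ⟨hS, hS1, hS2⟩, c, rfl⟩ := hF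
  have he := hS2 _ (eV_mem k)
  have hf := hS2 _ (fV_mem k)
  refine ⟨c, ?_, ?_, ?_, ?_, ?_, ?_, ?_, ?_, ?_, ?_, ?_⟩
  · rintro rfl
    simpa using ⟨hS, hS1, hS2⟩
  iterate 8
    focus
      simp only [LinearMap.add_apply, he, hf, LinearMap.smul_apply, Jrot_apply, Module.End.one_apply]
      simp [eV, fV, emb, mul_comm]
  · intro w hw
    have h1 := hw ⟨k, by omega⟩ le_rfl
    have h2 := hw ⟨k + 1, by omega⟩ (by simp)
    have hJ : Jrot k w = 0 := by rw [Jrot_apply, h1, h2]; simp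
    have : (S + c • (Jrot k + a • (1 : Module.End ℝ (Mink (k + 2))))) w = S w + c • a • w := by
      simp [hJ]
    rw [this]
    exact (MW1 k).add_mem (hS1 w hw) ((MW1 k).smul_mem _ ((MW1 k).smul_mem _ hw))
  · have h := hS (pvec (k + 2)) (qvec (k + 2))
    simp [minkB_apply', pvec, qvec] at h
    simp [Jrot_apply]
    simp [pvec, qvec]
    linarith

/-- The `W1` component. -/
def w1 (k : ℕ) (x : Mink (k + 2)) : Mink (k + 2) :=
  x - x.2.1 ⟨k, by omega⟩ • eV k - x.2.1 ⟨k + 1, by omega⟩ • fV k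

lemma w1_mem (k : ℕ) (x : Mink (k + 2)) : w1 k x ∈ MW1 k := by
  intro i hi
  have hkk : k < k + 2 := by omega
  have hkk1 : k + 1 < k + 2 := by omega
  have : i = ⟨k, hkk⟩ ∨ i = ⟨k + 1, hkk1⟩ := by
    rcases i with ⟨i, h⟩
    simp only [Fin.mk.injEq] at *
    omega
  rcases this with rfl | rfl <;> simp [w1, eV, fV, emb, Pi.single_apply]

lemma curv_mem (k : ℕ) (a : ℝ) (ha : a ≠ 0)
    (R : Mink (k + 2) →ₗ[ℝ] Mink (k + 2) →ₗ[ℝ] Module.End ℝ (Mink (k + 2)))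
    (hR : IsCurv (g16 k a) R) (x y : Mink (k + 2)) : R x y ∈ so1 k := by
  obtain ⟨hanti, hmem, hB⟩ := hR
  choose c h0 h1 h2 h3 h4 h5 h6 h7 h8 h9 h10 using fun x y => g16_struct k a _ (hmem x y)
  have cadd : ∀ x x' y, c (x + x') y = c x y + c x' y := fun x x' y => by
    rw [← h2, ← h2 x, ← h2 x']; simp
  have csm : ∀ (t : ℝ) x y, c (t • x) y = t * c x y := fun t x y => by
    rw [← h2, ← h2 x]; simp
  have canti : ∀ x y, c x y = - c y x := fun x y => by
    rw [← h2, ← h2 y, hanti x y]; simp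
  have cself : ∀ x, c x x = 0 := fun x => by have := canti x x; linarith
  -- W1, W1
  have c11 : ∀ x ∈ MW1 k, ∀ y ∈ MW1 k, c x y = 0 := by
    intro x hx y hy
    have hb := congrArg (fun z : Mink (k + 2) => z.2.1 ⟨k + 1, by omega⟩) (hB x y (eV k))
    have e1 := h9 y (eV k) x hx ⟨k + 1, by omega⟩ (by simp)
    have e2 := h9 (eV k) x y hy ⟨k + 1, by omega⟩ (by simp)
    simp only [Prod.fst_add, Prod.snd_add, Pi.add_apply, h2, e1, e2] at hb
    simpa using hb
  have c12 : ∀ x ∈ MW1 k, c x (eV k) = 0 ∧ c x (fV k) = 0 := by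
    intro x hx
    have hb := hB x (eV k) (fV k)
    have hb1 := congrArg (fun z : Mink (k + 2) => z.2.1 ⟨k, by omega⟩) hb
    have hb2 := congrArg (fun z : Mink (k + 2) => z.2.1 ⟨k + 1, by omega⟩) hb
    have e1 := h9 (eV k) (fV k) x hx ⟨k, by omega⟩ (by simp)
    have e2 := h9 (eV k) (fV k) x hx ⟨k + 1, by omega⟩ (by simp)
    simp only [Prod.fst_add, Prod.snd_add, Pi.add_apply, h1, h2, h3, h4, e1, e2,
      canti (fV k) x, Prod.snd_zero, Prod.fst_zero, Pi.zero_apply] at hb1 hb2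
    have hu : c x (eV k) * (1 + a ^ 2) = 0 := by linear_combination a * hb2 * 0 - hb1 + a * hb2
    have hu0 : c x (eV k) = 0 := by
      rcases mul_eq_zero.1 hu with h | h
      · exact h
      · nlinarith [sq_nonneg a]
    refine ⟨hu0, ?_⟩
    rw [hu0] at hb2
    linarith
  have cef : c (eV k) (fV k) = 0 := by
    have hp := congrArg (fun z : Mink (k + 2) => z.1) (hB (eV k) (fV k) (pvec (k + 2)))
    have hq := congrArg (fun z : Mink (k + 2) => z.2.2) (hB (eV k) (fV k) (qvec (k + 2)))
    simp only [Prod.fst_add, Prod.snd_add, h5, h6, h7, h8, Prod.fst_zero, Prod.snd_zero,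
      add_zero] at hp hq
    have := h10 (eV k) (fV k)
    rw [hp, hq] at this
    have h : a * c (eV k) (fV k) = 0 := by linarith
    exact (mul_eq_zero.1 h).resolve_left ha
  have cw : ∀ w ∈ MW1 k, ∀ y, c w y = 0 := by
    intro w hw y
    have hy : y = w1 k y + (y.2.1 ⟨k, by omega⟩ • eV k + y.2.1 ⟨k + 1, by omega⟩ • fV k) := by
      rw [w1]; abel
    rw [canti, hy, cadd, cadd, csm, csm, canti (eV k), canti (fV k), (c12 w hw).1, (c12 w hw).2,
      c11 _ (w1_mem k y) w hw]
    simp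
  have ce : ∀ y, c (eV k) y = 0 := by
    intro y
    have hy : y = w1 k y + (y.2.1 ⟨k, by omega⟩ • eV k + y.2.1 ⟨k + 1, by omega⟩ • fV k) := by
      rw [w1]; abel
    rw [canti, hy, cadd, cadd, csm, csm, cself, canti (fV k), cef, cw _ (w1_mem k y)]
    simp
  have cf : ∀ y, c (fV k) y = 0 := by
    intro y
    have hy : y = w1 k y + (y.2.1 ⟨k, by omega⟩ • eV k + y.2.1 ⟨k + 1, by omega⟩ • fV k) := by
      rw [w1]; abel
    rw [canti, hy, cadd, cadd, csm, csm, cself, cef, cw _ (w1_mem k y)]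
    simp
  apply h0
  have hx : x = w1 k x + (x.2.1 ⟨k, by omega⟩ • eV k + x.2.1 ⟨k + 1, by omega⟩ • fV k) := by
    rw [w1]; abel
  rw [hx, cadd, cadd, csm, csm, ce, cf, cw _ (w1_mem k x)]
  simp

lemma so1_zero (k : ℕ) : (0 : Module.End ℝ (Mink (k + 2))) ∈ so1 k :=
  ⟨fun x y => by simp, fun x _ => (MW1 k).zero_mem, fun x _ => rfl⟩

lemma so1_add (k : ℕ) (S T : Module.End ℝ (Mink (k + 2))) (hS : S ∈ so1 k) (hT : T ∈ so1 k) :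
    S + T ∈ so1 k := by
  refine ⟨fun x y => ?_, fun x hx => (MW1 k).add_mem (hS.2.1 x hx) (hT.2.1 x hx), fun x hx => ?_⟩
  · have h1 := hS.1 x y
    have h2 := hT.1 x y
    simp only [LinearMap.add_apply, map_add]
    linarith
  · simp [hS.2.2 x hx, hT.2.2 x hx]

lemma so1_smul (k : ℕ) (t : ℝ) (S : Module.End ℝ (Mink (k + 2))) (hS : S ∈ so1 k) :
    t • S ∈ so1 k := by
  refine ⟨fun x y => ?_, fun x hx => (MW1 k).smul_mem t (hS.2.1 x hx), fun x hx => ?_⟩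
  · have h1 := hS.1 x y
    simp only [LinearMap.smul_apply, map_smul, smul_eq_mul]
    linear_combination t * h1
  · simp [hS.2.2 x hx]

/-- For `k ≥ 1`, `n = k+2`, and `a ≠ 0`, every algebraic curvature tensor of
type `𝔤 = so(1,k+1) ⊕ ℝ·(e_{n−1}∧e_n + a·id)` takes values in `so(1,k+1)`;
in particular `L(ℛ(𝔤)) ⊆ so(1,k+1) ⊊ 𝔤` and `𝔤` is not a Berger algebra. -/
theorem rotation_plus_id_not_Berger (k : ℕ) (hk : 1 ≤ k) (a : ℝ) (ha : a ≠ 0) :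
    (∀ R, IsCurv (g16 k a) R → ∀ x y, R x y ∈ so1 k) ∧
    (curvSpan (g16 k a) : Set (Module.End ℝ (Mink (k + 2)))) ⊆ so1 k ∧
    so1 k ⊆ g16 k a ∧ so1 k ≠ g16 k a ∧ ¬ IsBerger (g16 k a) := by
  have hcurv : ∀ R, IsCurv (g16 k a) R → ∀ x y, R x y ∈ so1 k :=
    fun R hR x y => curv_mem k a ha R hR x y
  have hspan : (curvSpan (g16 k a) : Set (Module.End ℝ (Mink (k + 2)))) ⊆ so1 k := by
    intro F hF
    refine Submodule.span_induction (p := fun F _ => F ∈ so1 k) ?_ (so1_zero k)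
      (fun S T _ _ => so1_add k S T) (fun t S _ => so1_smul k t S) hF
    rintro F ⟨R, hR, x, y, rfl⟩
    exact hcurv R hR x y
  have hsub : so1 k ⊆ g16 k a := fun S hS => ⟨S, hS, 0, by simp⟩
  have hne : so1 k ≠ g16 k a := by
    intro h
    have hT : Jrot k + a • (1 : Module.End ℝ (Mink (k + 2))) ∈ so1 k := by
      rw [h]
      exact ⟨0, so1_zero k, 1, by simp⟩
    have h1 := congrArg (fun z : Mink (k + 2) => z.2.1 ⟨k + 1, by omega⟩) (hT.2.2 _ (eV_mem k))
    simp [Jrot_apply] at h1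
    simp [eV, fV, emb, Pi.single_apply] at h1
  refine ⟨hcurv, hspan, hsub, hne, fun hb => hne (hsub.antisymm ?_)⟩
  have hb' : (curvSpan (g16 k a) : Set (Module.End ℝ (Mink (k + 2)))) = g16 k a := hb
  rw [← hb']
  exact hspan

end Weyl
end
end

section
/- Let 𝔤 = ℝ·id_{ℝ^{1,n+1}} ⊕ 𝔤^{4,𝔥,m,ψ} ⊆ co(1,n+1)_{ℝp}, where, for a fixed orthogonal decomposition ℝⁿ = ℝᵐ ⊕ ℝ^{n−m} with 0 < n−m, a subalgebra 𝔥 ⊆ so(m) with dim z(𝔥) ≥ n−m, and a surjective linear map ψ : 𝔥 → ℝ^{n−m} with ψ|_{[𝔥,𝔥]} = 0, one sets 𝔤^{4,𝔥,m,ψ} := {(0, A, X + ψ(A)) : A ∈ 𝔥, X ∈ ℝᵐ}. Then L(ℛ(𝔤)) ⊆ so(1,n+1); consequently 𝔤 is not a Berger algebra, and more generally no subalgebra 𝔤' ⊆ co(1,n+1)_{ℝp} with 𝔤' ⊄ so(1,n+1) and pr_{so(1,n+1)}𝔤' = 𝔤^{4,𝔥,m,ψ} is a Berger algebra. -/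
open Module

noncomputable section

namespace Weyl

variable {V : Type*} [AddCommGroup V] [Module ℝ V]

/-- The element `(b, a, A, X) = b·id + (a, A, X)` of `co(1,n+1)_{ℝp}`:
it maps `p ↦ (a+b)·p`, `U ↦ (X,U)·p + A U + b·U` for `U ∈ ℝⁿ`, and
`q ↦ −X + (b−a)·q`. -/
def coElem {n : ℕ} (b a : ℝ) (A : Module.End ℝ (Fin n → ℝ)) (X : Fin n → ℝ) :
    Module.End ℝ (Mink n) where
  toFun w := ((b + a) * w.1 + dotE n X w.2.1,
              b • w.2.1 + A w.2.1 - w.2.2 • X,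
              (b - a) * w.2.2)
  map_add' w w' := by
    simp only [Prod.fst_add, Prod.snd_add, map_add, Prod.mk_add_mk, add_smul]
    refine Prod.ext (by ring) (Prod.ext ?_ (by ring))
    simp only [smul_add]
    abel
  map_smul' c w := by
    simp only [Prod.smul_fst, Prod.smul_snd, smul_eq_mul, map_smul,
      RingHom.id_apply, Prod.smul_mk]
    refine Prod.ext (by simp; ring) (Prod.ext ?_ (by simp; ring))
    simp only [smul_smul, smul_sub, LinearMap.map_smul]
    rw [mul_comm]
    module

/-- The Lie algebra `so(n)` of skew-symmetric endomorphisms of Euclidean `ℝⁿ`. -/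
def soE (n : ℕ) : Set (Module.End ℝ (Fin n → ℝ)) := soSet (dotE n)

/-- The subalgebra `co(1,n+1)_{ℝp}` of `co(1,n+1)` preserving the isotropic line `ℝp`,
whose elements are written `(b, a, A, X)`. -/
def coRp (n : ℕ) : Set (Module.End ℝ (Mink n)) :=
  {F | ∃ b a : ℝ, ∃ A ∈ soE n, ∃ X : Fin n → ℝ, F = coElem b a A X}

/-- The subspace `ℝᵏ ⊆ ℝⁿ` spanned by the first `k` coordinates. -/
def Ek (n k : ℕ) : Submodule ℝ (Fin n → ℝ) where
  carrier := {x | ∀ i : Fin n, k ≤ (i : ℕ) → x i = 0}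
  zero_mem' := fun i _ => rfl
  add_mem' := by
    intro a b ha hb i hi
    simp [ha i hi, hb i hi]
  smul_mem' := by
    intro c a ha i hi
    simp [ha i hi]

/-- The subspace `ℝ^{n−k} ⊆ ℝⁿ` spanned by the last `n − k` coordinates. -/
def EkP (n k : ℕ) : Submodule ℝ (Fin n → ℝ) where
  carrier := {x | ∀ i : Fin n, (i : ℕ) < k → x i = 0}
  zero_mem' := fun i _ => rfl
  add_mem' := by
    intro a b ha hb i hi
    simp [ha i hi, hb i hi]
  smul_mem' := by
    intro c a ha i hi
    simp [ha i hi]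

/-- `so(k)` regarded as a subalgebra of `so(n)`: skew endomorphisms preserving
`ℝᵏ` (the first `k` coordinates) and vanishing on `ℝ^{n−k}`. -/
def soOn (n k : ℕ) : Set (Module.End ℝ (Fin n → ℝ)) :=
  {A | A ∈ soE n ∧ (∀ x ∈ Ek n k, A x ∈ Ek n k) ∧ ∀ y ∈ EkP n k, A y = 0}

/-- `so(n−k)` regarded as a subalgebra of `so(n)`: skew endomorphisms preserving
`ℝ^{n−k}` (the last `n − k` coordinates) and vanishing on `ℝᵏ`. -/
def soComp (n k : ℕ) : Set (Module.End ℝ (Fin n → ℝ)) :=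
  {A | A ∈ soE n ∧ (∀ x ∈ EkP n k, A x ∈ EkP n k) ∧ ∀ y ∈ Ek n k, A y = 0}

/-- The projection `pr_{so(1,n+1)} g` of `g ⊆ co(1,n+1)` to `so(1,n+1)` along `ℝ·id`. -/
def prSO (n : ℕ) (g : Set (Module.End ℝ (Mink n))) : Set (Module.End ℝ (Mink n)) :=
  {S | S ∈ soSet (minkB n) ∧ ∃ c : ℝ, c • (1 : Module.End ℝ (Mink n)) + S ∈ g}

theorem aux_dotE_comm {n : ℕ} (x y : Fin n → ℝ) : dotE n x y = dotE n y x := by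
  simp [dotE, mul_comm]

theorem aux_dotE_single {n : ℕ} (x : Fin n → ℝ) (i : Fin n) :
    dotE n x (Pi.single i 1) = x i := by
  simp [dotE, Pi.single_apply]

theorem aux_dotE_ext {n : ℕ} (x : Fin n → ℝ) (hx : ∀ y, dotE n x y = 0) : x = 0 := by
  funext i
  rw [← aux_dotE_single x i, hx]; rfl

/-- The first prolongation of `so(n)` is zero. -/
theorem aux_prolong {n : ℕ} (f : (Fin n → ℝ) → Module.End ℝ (Fin n → ℝ))
    (hf : ∀ u, f u ∈ soE n) (hs : ∀ u v, f u v = f v u) (u : Fin n → ℝ) : f u = 0 := by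
  have key : ∀ u v w, dotE n (f u v) w = - dotE n (f u w) v := by
    intro u v w
    have h1 := hf u v w
    rw [aux_dotE_comm v] at h1
    linarith
  refine LinearMap.ext fun v => aux_dotE_ext _ fun w => ?_
  have h1 := key u v w
  have h2 := key w u v
  have h3 := key v w u
  rw [hs u w] at h1
  rw [hs w v] at h2
  rw [hs v u] at h3
  linarith

theorem aux_range {n m : ℕ} (A : Module.End ℝ (Fin n → ℝ)) (hA : A ∈ soOn n m)
    (i : Fin n) (hi : m ≤ (i : ℕ)) (x : Fin n → ℝ) : A x i = 0 := by
  have h1 := hA.1 x (Pi.single i 1)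
  have h2 : A (Pi.single i 1) = 0 := by
    refine hA.2.2 _ fun j hj => ?_
    have : j ≠ i := by rintro rfl; omega
    simp [this]
  rw [h2, aux_dotE_single] at h1
  simpa using h1

theorem aux_coElem_so {n : ℕ} (a : ℝ) (A : Module.End ℝ (Fin n → ℝ)) (hA : A ∈ soE n)
    (X : Fin n → ℝ) : coElem 0 a A X ∈ soSet (minkB n) := by
  intro x y
  have h1 := hA x.2.1 y.2.1
  simp only [coElem, minkB, LinearMap.mk₂_apply, LinearMap.coe_mk, AddHom.coe_mk, map_sub,
    map_smul, LinearMap.sub_apply, LinearMap.smul_apply, zero_smul, zero_add, smul_eq_mul]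
  rw [aux_dotE_comm x.2.1 X]
  linarith

theorem aux_coElem_split {n : ℕ} (b a : ℝ) (A : Module.End ℝ (Fin n → ℝ))
    (X : Fin n → ℝ) :
    coElem b a A X = b • (1 : Module.End ℝ (Mink n)) + coElem 0 a A X := by
  refine LinearMap.ext fun w => ?_
  simp only [coElem, LinearMap.coe_mk, AddHom.coe_mk, LinearMap.add_apply,
    LinearMap.smul_apply, Module.End.one_apply]
  refine Prod.ext ?_ (Prod.ext ?_ ?_)
  · simp; ring
  · simp; abel
  · simp; ring

theorem aux_id_notso {n : ℕ} : (1 : Module.End ℝ (Mink n)) ∉ soSet (minkB n) := by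
  intro h1
  have := h1 (pvec n) (qvec n)
  simp [minkB, pvec, qvec] at this

/-- Any curvature tensor of type `ℝ·id ⊕ 𝔤^{4,𝔥,m,ψ}` takes values in `so(1,n+1)`. -/
theorem aux_curv (n m : ℕ) (hm : m < n)
    (h : Set (Module.End ℝ (Fin n → ℝ))) (hso : h ⊆ soOn n m)
    (ψ : Module.End ℝ (Fin n → ℝ) →ₗ[ℝ] (Fin n → ℝ))
    (R : Mink n →ₗ[ℝ] Mink n →ₗ[ℝ] Module.End ℝ (Mink n))
    (hR : IsCurv {F | ∃ b : ℝ, ∃ A ∈ h, ∃ X ∈ Ek n m, F = coElem b 0 A (X + ψ A)} R)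
    (x y : Mink n) : R x y ∈ soSet (minkB n) := by
  obtain ⟨hanti, hmem, hB⟩ := hR
  choose b A hA X hX hF using hmem
  obtain ⟨Y, hY⟩ : ∃ Y : Mink n → Mink n → Fin n → ℝ, ∀ x y, Y x y = X x y + ψ (A x y) :=
    ⟨_, fun _ _ => rfl⟩
  have hF' : ∀ x y w, R x y w = (b x y * w.1 + dotE n (Y x y) w.2.1,
      b x y • w.2.1 + A x y w.2.1 - w.2.2 • Y x y, b x y * w.2.2) := by
    intro x y w
    rw [hF x y, hY]; simp [coElem]
  have hb : ∀ x y, b x y = (R x y (qvec n)).2.2 := by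
    intro x y; rw [hF']; simp [qvec]
  have hb_anti : ∀ x y, b x y = - b y x := by
    intro x y; rw [hb, hb y x, hanti x y]; simp
  have hA' : ∀ x y w, A x y w = (R x y (emb w)).2.1 - b x y • w := by
    intro x y w; rw [hF']; simp [emb]
  have hA_anti : ∀ x y w, A x y w = - A y x w := by
    intro x y w; rw [hA' x y, hA' y x, hanti x y, hb_anti x y]; simp; abel
  have hAso : ∀ x y, A x y ∈ soE n := fun x y => (hso (hA x y)).1
  have Bp : ∀ x y z : Mink n, (b x y * z.1 + dotE n (Y x y) z.2.1) +
      (b y z * x.1 + dotE n (Y y z) x.2.1) + (b z x * y.1 + dotE n (Y z x) y.2.1) = 0 := by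
    intro x y z
    have := congrArg (fun w => w.1) (hB x y z)
    simpa [hF'] using this
  have Bn : ∀ x y z : Mink n, (b x y • z.2.1 + A x y z.2.1 - z.2.2 • Y x y) +
      (b y z • x.2.1 + A y z x.2.1 - x.2.2 • Y y z) +
      (b z x • y.2.1 + A z x y.2.1 - y.2.2 • Y z x) = 0 := by
    intro x y z
    have := congrArg (fun w => w.2.1) (hB x y z)
    simpa [hF'] using this
  have Bq : ∀ x y z : Mink n, b x y * z.2.2 + b y z * x.2.2 + b z x * y.2.2 = 0 := by
    intro x y z
    have := congrArg (fun w => w.2.2) (hB x y z)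
    simpa [hF'] using this
  have hbq : ∀ x y, b x y = x.2.2 * b (qvec n) y - y.2.2 * b (qvec n) x := by
    intro x y
    have h1 := Bq x y (qvec n)
    have h2 := hb_anti y (qvec n)
    rw [h2] at h1
    simp only [qvec] at h1 ⊢
    linarith
  have hb0 : ∀ x y : Mink n, x.2.2 = 0 → y.2.2 = 0 → b x y = 0 := by
    intro x y hx hy; rw [hbq, hx, hy]; simp
  -- the distinguished unit vector in the last `n - m` coordinates
  obtain ⟨i, hi⟩ : ∃ i : Fin n, (i : ℕ) = m := ⟨⟨m, hm⟩, rfl⟩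
  obtain ⟨V, hV⟩ : ∃ V : Fin n → ℝ, V = Pi.single i 1 := ⟨_, rfl⟩
  have hVP : V ∈ EkP n m := by
    intro j hj
    have : j ≠ i := by rintro rfl; omega
    simp [hV, this]
  have hVi : V i = 1 := by simp [hV]
  have hAV : ∀ x y, A x y V = 0 := fun x y => (hso (hA x y)).2.2 V hVP
  have hAi : ∀ x y w, A x y w i = 0 := fun x y w => aux_range _ (hso (hA x y)) i hi.ge w
  have hYi : ∀ x y, A x y = 0 → Y x y i = 0 := by
    intro x y h0
    rw [hY, h0]; simp [hX x y i hi.ge]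
  -- `A(p,U) = 0`
  have hAp : ∀ u, A (pvec n) (emb u) = 0 := by
    refine aux_prolong (fun u => A (pvec n) (emb u)) (fun u => hAso _ _) ?_
    intro u v
    have h1 := Bn (pvec n) (emb u) (emb v)
    rw [hb0 (pvec n) (emb u) rfl rfl, hb0 (emb v) (pvec n) rfl rfl,
      hA_anti (emb v) (pvec n)] at h1
    simp [pvec, emb] at h1
    exact (add_neg_eq_zero.mp h1)
  have hYsymm : ∀ u v, dotE n (Y (pvec n) (emb u)) v = - dotE n (Y (emb v) (pvec n)) u := by
    intro u v
    have h1 := Bp (pvec n) (emb u) (emb v)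
    rw [hb0 (emb u) (emb v) rfl rfl] at h1
    simp [pvec, emb] at h1
    exact eq_neg_of_add_eq_zero_left h1
  have hY' : ∀ x y, Y x y = - (R x y (qvec n)).2.1 := by
    intro x y; rw [hF']; simp [qvec]
  have hY_anti : ∀ x y, Y x y = - Y y x := by
    intro x y; rw [hY', hY' y x, hanti x y]; simp
  have hpUq : ∀ u, - Y (pvec n) (emb u) + (b (qvec n) (pvec n) • u
      + A (qvec n) (pvec n) u) = 0 := by
    intro u
    have h1 := Bn (pvec n) (emb u) (qvec n)
    rw [hb0 (pvec n) (emb u) rfl rfl] at h1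
    simp [pvec, emb, qvec] at h1
    exact h1
  have hbqp : b (qvec n) (pvec n) = 0 := by
    have h1 := congrFun (hpUq V) i
    simpa [hYi _ _ (hAp V), hAV, hVi] using h1
  have hAqp : A (qvec n) (pvec n) = 0 := by
    refine LinearMap.ext fun u => aux_dotE_ext _ fun w => ?_
    have e : ∀ u, Y (pvec n) (emb u) = A (qvec n) (pvec n) u := by
      intro u
      have h1 := hpUq u
      rw [hbqp, zero_smul, zero_add] at h1
      exact neg_add_eq_zero.mp h1
    have h1 := hYsymm u w
    rw [hY_anti (emb w), e, e] at h1
    simp only [map_neg, LinearMap.neg_apply, neg_neg] at h1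
    have h2 := hAso (qvec n) (pvec n) u w
    rw [aux_dotE_comm u] at h2
    linarith
  have hbVq : b (emb V) (qvec n) = 0 := by
    have h1 := Bp (pvec n) (emb V) (qvec n)
    have h2 : dotE n (Y (qvec n) (pvec n)) V = 0 := by
      rw [hV, aux_dotE_single]; exact hYi _ _ hAqp
    simp only [pvec, emb, qvec] at h1 h2 ⊢
    simp [h2] at h1
    exact h1
  have hAUV : ∀ u, A (emb u) (emb V) = 0 := by
    refine aux_prolong (fun u => A (emb u) (emb V)) (fun u => hAso _ _) ?_
    intro u w
    have h1 := Bn (emb u) (emb V) (emb w)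
    rw [hb0 (emb u) (emb V) rfl rfl, hb0 (emb V) (emb w) rfl rfl,
      hb0 (emb w) (emb u) rfl rfl, hA_anti (emb V) (emb w)] at h1
    have h2 : A (emb w) (emb u) (emb V).2.1 = 0 := hAV _ _
    rw [h2] at h1
    simp [emb] at h1
    exact (add_neg_eq_zero.mp h1)
  have hbqU : ∀ u, b (qvec n) (emb u) = 0 := by
    intro u
    have h1 := congrFun (Bn (emb u) (emb V) (qvec n)) i
    have h3 := hYi _ _ (hAUV u)
    rw [hbVq] at h1
    simp [hAi, h3] at h1
    simpa [emb, qvec, hVi, h3] using h1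
  have hbqq : b (qvec n) (qvec n) = 0 := by
    have := hb_anti (qvec n) (qvec n)
    linarith
  have hbqx : ∀ x, b (qvec n) x = 0 := by
    intro x
    have hx : x = x.1 • pvec n + emb x.2.1 + x.2.2 • qvec n := by
      refine Prod.ext ?_ (Prod.ext ?_ ?_) <;> simp [pvec, emb, qvec]
    rw [hb, hx]
    simp only [map_add, map_smul, LinearMap.add_apply, LinearMap.smul_apply, Prod.snd_add,
      Prod.smul_snd, ← hb, hbqp, hbqU, hbqq]
    simp
  rw [hF x y, hbq x y, hbqx, hbqx]
  simpa using aux_coElem_so 0 (A x y) (hAso x y) (X x y + ψ (A x y))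

theorem aux_span (n m : ℕ) (hm : m < n)
    (h : Set (Module.End ℝ (Fin n → ℝ))) (hso : h ⊆ soOn n m)
    (ψ : Module.End ℝ (Fin n → ℝ) →ₗ[ℝ] (Fin n → ℝ))
    (g' : Set (Module.End ℝ (Mink n)))
    (hg : g' ⊆ {F | ∃ b : ℝ, ∃ A ∈ h, ∃ X ∈ Ek n m, F = coElem b 0 A (X + ψ A)}) :
    (curvSpan g' : Set (Module.End ℝ (Mink n))) ⊆ soSet (minkB n) := by
  intro F hF
  refine Submodule.span_induction (p := fun F _ => F ∈ soSet (minkB n)) ?_ ?_ ?_ ?_ hF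
  · rintro _ ⟨R, hR, x, y, rfl⟩
    exact aux_curv n m hm h hso ψ R ⟨hR.1, fun x y => hg (hR.2.1 x y), hR.2.2⟩ x y
  · intro x y; simp
  · intro F G _ _ h1 h2 x y
    have e1 := h1 x y
    have e2 := h2 x y
    simp only [LinearMap.add_apply, map_add]
    linarith
  · intro c F _ h1 x y
    have e1 := h1 x y
    simp only [LinearMap.smul_apply, map_smul, smul_eq_mul]
    rw [← mul_add, e1, mul_zero]

/-- For `𝔤 = ℝ·id ⊕ 𝔤^{4,𝔥,m,ψ}`, the space `L(ℛ(𝔤))` is contained in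
`so(1,n+1)`; consequently `𝔤` is not a Berger algebra, and no subalgebra
`𝔤' ⊆ co(1,n+1)_{ℝp}` with `𝔤' ⊄ so(1,n+1)` and `pr_{so(1,n+1)}𝔤' = 𝔤^{4,𝔥,m,ψ}`
is a Berger algebra. -/
theorem type4_not_Berger (n m : ℕ) (hm : m < n)
    (h : Set (Module.End ℝ (Fin n → ℝ)))
    (hsub : IsLieSub h) (hso : h ⊆ soOn n m)
    (hz : ∃ Zc : Submodule ℝ (Module.End ℝ (Fin n → ℝ)),
      (Zc : Set (Module.End ℝ (Fin n → ℝ)))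
          = {A | A ∈ h ∧ ∀ B ∈ h, A * B = B * A} ∧
      n - m ≤ Module.finrank ℝ Zc)
    (ψ : Module.End ℝ (Fin n → ℝ) →ₗ[ℝ] (Fin n → ℝ))
    (hψ1 : ∀ A ∈ h, ψ A ∈ EkP n m)
    (hψ2 : ∀ y ∈ EkP n m, ∃ A ∈ h, ψ A = y)
    (hψ3 : ∀ A ∈ h, ∀ B ∈ h, ψ (A * B - B * A) = 0) :
    (curvSpan {F | ∃ b : ℝ, ∃ A ∈ h, ∃ X ∈ Ek n m, F = coElem b 0 A (X + ψ A)}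
        : Set (Module.End ℝ (Mink n))) ⊆ soSet (minkB n) ∧
    ¬ IsBerger {F | ∃ b : ℝ, ∃ A ∈ h, ∃ X ∈ Ek n m, F = coElem b 0 A (X + ψ A)} ∧
    (∀ g' : Set (Module.End ℝ (Mink n)), IsLieSub g' → g' ⊆ coRp n →
      ¬ g' ⊆ soSet (minkB n) →
      prSO n g' = {F | ∃ A ∈ h, ∃ X ∈ Ek n m, F = coElem 0 0 A (X + ψ A)} →
      ¬ IsBerger g') := by
  refine ⟨aux_span n m hm h hso ψ _ subset_rfl, ?_, ?_⟩
  · intro hBer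
    refine aux_id_notso (n := n) ?_
    refine aux_span n m hm h hso ψ _ subset_rfl ?_
    rw [hBer]
    refine ⟨1, 0, hsub.1, 0, Submodule.zero_mem _, ?_⟩
    refine LinearMap.ext fun w => ?_
    simp [coElem]
  · intro g' _ hco hns hpr hBer
    refine hns ?_
    rw [← hBer]
    refine aux_span n m hm h hso ψ _ ?_
    intro F hF
    obtain ⟨b, a, A, hA, X, rfl⟩ := hco hF
    have h1 : coElem 0 a A X ∈ prSO n g' := by
      refine ⟨aux_coElem_so a A hA X, b, ?_⟩
      rw [← aux_coElem_split]; exact hF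
    rw [hpr] at h1
    obtain ⟨A', hA', X', hX', e⟩ := h1
    refine ⟨b, A', hA', X', hX', ?_⟩
    rw [aux_coElem_split, e, ← aux_coElem_split]


end Weyl
end
end
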